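/- arXiv:0711.1993 — 3 statements merged into one kernel-verified Lean document; each statement's English description precedes it below -/
import Mathlib

section
/- Let (L, ≤) be a finite lattice that is ∨-minimal regular, i.e. every maximal chain of L has length |J(L)| (equivalently, contains exactly |J(L)|+1 elements). Then the set system (J(L), η(L)), where η(L) = {η(a) : a ∈ L}, is a regular set system: every maximal chain of the family η(L) ordered by inclusion has length |J(L)|. -/
open Finset

variable {L : Type*} [Lattice L] [Fintype L] [BoundedOrder L] [DecidableEq L]

noncomputable instance : Fintype {x : L // SupIrred x} := Fintype.ofFinite _

/-- `c = (c 0, …, c m)` is a maximal chain of the lattice `L`: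
`⊥ = c 0 ≺ c 1 ≺ ⋯ ≺ c m = ⊤`, where `≺` is the covering relation.
Its length is `m`. -/
def IsMaxChainLat (m : ℕ) (c : Fin (m + 1) → L) : Prop :=
  c 0 = ⊥ ∧ c (Fin.last m) = ⊤ ∧ ∀ i : Fin m, c i.castSucc ⋖ c i.succ

/-- `η(a) = {x ∈ J(L) : x ≤ a}`, where `J(L)` is the set of `∨`-irreducible
elements of `L`. -/
noncomputable def eta (a : L) : Finset {x : L // SupIrred x} :=
  @Finset.filter _ (fun x => (x : L) ≤ a) (Classical.decPred _) Finset.univ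

/-- The set system `η(L) = {η(a) : a ∈ L}` on the ground set `J(L)`. -/
noncomputable def etaSystem (L : Type*) [Lattice L] [Fintype L] [DecidableEq L] :
    Finset (Finset {x : L // SupIrred x}) :=
  Finset.univ.image eta

/-- `c = (c 0, …, c m)` is a maximal chain of the set system `S`. -/
def IsMaxChainOf {β : Type*} [Fintype β] (S : Finset (Finset β)) (m : ℕ)
    (c : Fin (m + 1) → Finset β) : Prop :=
  c 0 = ∅ ∧ c (Fin.last m) = Finset.univ ∧ (∀ i, c i ∈ S) ∧
    (∀ i : Fin m, c i.castSucc ⊂ c i.succ) ∧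
    (∀ i : Fin m, ∀ x ∈ S, ¬(c i.castSucc ⊂ x ∧ x ⊂ c i.succ))

/-- A regular set system: `∅` and the ground set belong to it, and every maximal
chain has length equal to the cardinality of the ground set. -/
def IsRegularSetSystem {β : Type*} [Fintype β] (S : Finset (Finset β)) : Prop :=
  ∅ ∈ S ∧ Finset.univ ∈ S ∧
    ∀ (m : ℕ) (c : Fin (m + 1) → Finset β), IsMaxChainOf S m c → m = Fintype.card β

/-!
In a finite lattice every element is the join of the `∨`-irreducible elements below it, so `η` is an
order embedding with image `η(L)`. It therefore identifies the maximal chains of `L` with those of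
the family `η(L)`, and the lengths agree.
-/

theorem le_iff_forall_supIrred_le {α : Type*} [SemilatticeSup α] [OrderBot α] [WellFoundedLT α]
    {a b : α} : a ≤ b ↔ ∀ x, SupIrred x → x ≤ a → x ≤ b := by
  refine ⟨fun hab x _ hxa => hxa.trans hab, fun h => ?_⟩
  obtain ⟨s, rfl, hirr⟩ := exists_supIrred_decomposition a
  exact Finset.sup_le fun x hx => h x (hirr hx) (Finset.le_sup (f := id) hx)

section Eta

variable {M : Type*} [Lattice M] [Fintype M]

@[simp]
theorem mem_eta {a : M} {x : {x : M // SupIrred x}} : x ∈ eta a ↔ (x : M) ≤ a := by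
  simp [eta]

theorem eta_subset_eta_iff {a b : M} : eta a ⊆ eta b ↔ a ≤ b := by
  have : Nonempty M := ⟨a⟩
  let : OrderBot M := Fintype.toOrderBot M
  simp only [le_iff_forall_supIrred_le (a := a), Finset.subset_iff, mem_eta, Subtype.forall]

/-- The map `η` as an order embedding of `M` into the subsets of `J(M)`; its range is `η(M)`. -/
noncomputable def etaOrderEmbedding (M : Type*) [Lattice M] [Fintype M] :
    M ↪o Finset {x : M // SupIrred x} :=
  OrderEmbedding.ofMapLEIff eta fun _ _ => eta_subset_eta_iff

theorem eta_injective : Function.Injective (eta : M → Finset {x : M // SupIrred x}) :=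
  (etaOrderEmbedding M).injective

theorem eta_ssubset_eta_iff {a b : M} : eta a ⊂ eta b ↔ a < b :=
  (etaOrderEmbedding M).lt_iff_lt

theorem eta_bot [OrderBot M] : eta (⊥ : M) = ∅ :=
  Finset.eq_empty_of_forall_notMem fun x hx => x.2.ne_bot (le_bot_iff.1 (mem_eta.1 hx))

theorem eta_top [OrderTop M] : eta (⊤ : M) = Finset.univ :=
  Finset.eq_univ_of_forall fun _ => mem_eta.2 le_top

variable [DecidableEq M]

theorem mem_etaSystem {s : Finset {x : M // SupIrred x}} : s ∈ etaSystem M ↔ ∃ a, eta a = s := by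
  simp [etaSystem]

theorem eta_mem_etaSystem (a : M) : eta a ∈ etaSystem M :=
  mem_etaSystem.2 ⟨a, rfl⟩

theorem covBy_iff_eta_ssubset {a b : M} :
    a ⋖ b ↔ eta a ⊂ eta b ∧ ∀ s ∈ etaSystem M, ¬(eta a ⊂ s ∧ s ⊂ eta b) := by
  simp only [CovBy, mem_etaSystem, forall_exists_index, forall_apply_eq_imp_iff,
    eta_ssubset_eta_iff, not_and]

theorem isMaxChainOf_etaSystem_eta_iff [BoundedOrder M] {m : ℕ} {c : Fin (m + 1) → M} :
    IsMaxChainOf (etaSystem M) m (fun i => eta (c i)) ↔ IsMaxChainLat m c := by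
  simp only [IsMaxChainOf, IsMaxChainLat, ← eta_bot (M := M), ← eta_top (M := M),
    eta_injective.eq_iff, eta_mem_etaSystem, implies_true, true_and, covBy_iff_eta_ssubset,
    forall_and]

end Eta

/-- if the finite lattice `L` is `∨`-minimal regular (every maximal
chain of `L` has length `|J(L)|`), then `(J(L), η(L))` is a regular set system. -/
theorem etaSystem_isRegularSetSystem
    (hreg : ∀ (m : ℕ) (c : Fin (m + 1) → L), IsMaxChainLat m c →
      m = Fintype.card {x : L // SupIrred x}) :
    IsRegularSetSystem (etaSystem L) := by
  refine ⟨eta_bot (M := L) ▸ eta_mem_etaSystem ⊥, eta_top (M := L) ▸ eta_mem_etaSystem ⊤, ?_⟩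
  intro m c hc
  have hmem : ∀ i, c i ∈ etaSystem L := hc.2.2.1
  choose d hd using fun i => mem_etaSystem.1 (hmem i)
  obtain rfl : (fun i => eta (d i)) = c := funext hd
  exact hreg m d (isMaxChainOf_etaSystem_eta_iff.1 hc)
end

section
/- If (N, 𝔄) is an antimatroid on the finite set N with |N| = n, then the lattice (𝔄, ⊆) has exactly n ∧-irreducible elements, i.e. |M(𝔄)| = n. -/
/-!
In an antimatroid `𝔄`, let `M i` be the largest feasible set avoiding the point `i`.

* Every feasible `X` is the meet of the sets `M i` with `i ∉ X`, so a meet-irreducible `X` is one of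
  the `M i`.
* Removing points one at a time from a feasible set shows that `insert i (M i)` is feasible. It is
  therefore the least feasible set strictly containing `M i`, so `M i` is meet-irreducible. It also
  separates the `M i`: if `M i = M j` with `i ≠ j`, then `insert i (M i)` avoids `j` and so lies
  in `M j = M i`.
-/

open Finset

variable {α : Type*} [DecidableEq α] [Fintype α]

/-- `(N, S)` is a convex geometry. -/
def IsConvexGeometry (S : Finset (Finset α)) : Prop :=
  ∅ ∈ S ∧ Finset.univ ∈ S ∧ (∀ A ∈ S, ∀ B ∈ S, A ∩ B ∈ S) ∧
    ∀ A ∈ S, A ≠ Finset.univ → ∃ i ∉ A, insert i A ∈ S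

/-- The meet in the lattice `(𝔄, ⊆)` of an antimatroid:
`A ∧ B = ⋃ {Z ∈ 𝔄 : Z ⊆ A ∩ B}`. -/
def amInf (𝔄 : Finset (Finset α)) (A B : Finset α) : Finset α :=
  (𝔄.filter fun Z => Z ⊆ A ∩ B).sup id

section GreatestBelow

variable {L : Type*} [SemilatticeSup L] [OrderBot L] [DecidableLE L] {F : Finset L} {a x : L}

/-- The join of the elements of `F` below `a`. It is the greatest element of `F` below `a` when `F`
contains `⊥` and is closed under joins; in an antimatroid, it is the largest feasible subset of
`a`. -/
def greatestBelow (F : Finset L) (a : L) : L :=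
  {x ∈ F | x ≤ a}.sup id

theorem greatestBelow_le (F : Finset L) (a : L) : greatestBelow F a ≤ a :=
  Finset.sup_le fun _ hx ↦ (mem_filter.1 hx).2

theorem le_greatestBelow (hx : x ∈ F) (hxa : x ≤ a) : x ≤ greatestBelow F a :=
  le_sup (f := id) (mem_filter.2 ⟨hx, hxa⟩)

theorem greatestBelow_eq_self (hx : x ∈ F) : greatestBelow F x = x :=
  (greatestBelow_le F x).antisymm (le_greatestBelow hx le_rfl)

theorem greatestBelow_mem (hbot : ⊥ ∈ F) (hsup : SupClosed (F : Set L)) (a : L) :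
    greatestBelow F a ∈ F :=
  Finset.sup_mem (F : Set L) hbot (fun _ hx _ hy ↦ hsup hx hy) _ id fun _ hx ↦
    (mem_filter.1 hx).1

end GreatestBelow

section Irreducible

variable {L : Type*} [Lattice L] [DecidableLE L] {F : Finset L}

theorem greatestBelow_inf_greatestBelow [OrderBot L] (F : Finset L) (a b : L) :
    greatestBelow F (greatestBelow F a ⊓ greatestBelow F b) = greatestBelow F (a ⊓ b) := by
  refine congrArg (fun s : Finset L ↦ s.sup id) (filter_congr fun x hx ↦ ?_)
  have le_iff (c : L) : x ≤ greatestBelow F c ↔ x ≤ c :=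
    ⟨fun h ↦ h.trans (greatestBelow_le F c), le_greatestBelow hx⟩
  simp only [le_inf_iff, le_iff]

variable [BoundedOrder L] {x : L}

/-- Meet-irreducibility of `x` in the lattice `F`, whose meet is `(a, b) ↦ greatestBelow F (a ⊓ b)`
and whose top element is taken to be `⊤`. Membership of `x` in `F` is not included. -/
def IsInfIrredIn (F : Finset L) (x : L) : Prop :=
  x ≠ ⊤ ∧ ∀ a ∈ F, ∀ b ∈ F, greatestBelow F (a ⊓ b) = x → a = x ∨ b = x

theorem IsInfIrredIn.exists_greatestBelow_eq {ι : Type*} {s : Finset ι} {f : ι → L}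
    (hx : IsInfIrredIn F x) (hbot : ⊥ ∈ F) (htop : ⊤ ∈ F) (hsup : SupClosed (F : Set L))
    (h : greatestBelow F (s.inf f) = x) : ∃ i ∈ s, greatestBelow F (f i) = x := by
  classical
  induction s using Finset.induction_on with
  | empty => exact absurd (h.symm.trans (greatestBelow_eq_self htop)) hx.1
  | insert i s _ ih =>
    rw [inf_insert, ← greatestBelow_inf_greatestBelow] at h
    obtain hi | hs := hx.2 _ (greatestBelow_mem hbot hsup _) _ (greatestBelow_mem hbot hsup _) h
    · exact ⟨i, mem_insert_self i s, hi⟩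
    · obtain ⟨j, hj, hjx⟩ := ih hs
      exact ⟨j, mem_insert_of_mem hj, hjx⟩

theorem isInfIrredIn_of_forall_lt_le {y : L} (hxy : x < y) (hy : y ∈ F)
    (hle : ∀ z ∈ F, x < z → y ≤ z) : IsInfIrredIn F x := by
  refine ⟨hxy.ne_top, fun a ha b hb hab ↦ ?_⟩
  by_contra! hne
  have hx_le : x ≤ a ⊓ b := hab.symm.trans_le (greatestBelow_le F _)
  have hya : y ≤ a := hle a ha ((hx_le.trans inf_le_left).lt_of_ne hne.1.symm)
  have hyb : y ≤ b := hle b hb ((hx_le.trans inf_le_right).lt_of_ne hne.2.symm)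
  exact hxy.not_ge ((le_greatestBelow hy (le_inf hya hyb)).trans_eq hab)

end Irreducible

section Accessible

variable {β : Type*} [DecidableEq β] {F : Finset (Finset β)} {A : Finset β} {i : β}

/-- Accessibility of a set system: each nonempty member can be shrunk to another member by removing
a single point. It is the dual of axiom (iii) of convex geometries. -/
def IsAccessible (F : Finset (Finset β)) : Prop :=
  ∀ A ∈ F, A.Nonempty → ∃ i ∈ A, A.erase i ∈ F

theorem IsAccessible.exists_mem_erase_mem (hF : IsAccessible F) (hA : A ∈ F) (hi : i ∈ A) :
    ∃ B ∈ F, i ∈ B ∧ B.erase i ∈ F := by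
  obtain ⟨B, ⟨hB, hiB⟩, hmin⟩ :=
    exists_minimal_of_wellFoundedLT (fun B ↦ B ∈ F ∧ i ∈ B) ⟨A, hA, hi⟩
  obtain ⟨j, hj, hjB⟩ := hF B hB ⟨i, hiB⟩
  have hji : j = i := by
    by_contra hne
    have hiBj : i ∈ B.erase j := mem_erase_of_ne_of_mem (Ne.symm hne) hiB
    exact notMem_erase j B (hmin ⟨hjB, hiBj⟩ (erase_subset j B) hj)
  exact ⟨B, hB, hiB, hji ▸ hjB⟩

end Accessible

/-- Antimatroids on the ground set `α`, presented intrinsically by their feasible sets, that is, by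
the complements of the convex sets of a convex geometry. -/
structure IsAntimatroid (𝔄 : Finset (Finset α)) : Prop where
  empty_mem : ∅ ∈ 𝔄
  univ_mem : univ ∈ 𝔄
  supClosed : SupClosed (𝔄 : Set (Finset α))
  isAccessible : IsAccessible 𝔄

open scoped FinsetFamily in
theorem IsConvexGeometry.isAntimatroid_compls {S : Finset (Finset α)}
    (hS : IsConvexGeometry S) : IsAntimatroid Sᶜˢ := by
  obtain ⟨hempty, huniv, hinter, hinsert⟩ := hS
  refine ⟨?_, ?_, fun A hA B hB ↦ ?_, fun A hA hne ↦ ?_⟩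
  · rwa [mem_compls, compl_empty]
  · rwa [mem_compls, compl_univ]
  · rw [mem_coe, mem_compls] at hA hB ⊢
    rw [sup_eq_union, compl_union]
    exact hinter _ hA _ hB
  · obtain ⟨i, hi, hiA⟩ :=
      hinsert _ (mem_compls.1 hA) fun h ↦ hne.ne_empty (compl_eq_univ_iff A |>.1 h)
    exact ⟨i, notMem_compl.1 hi, by rwa [mem_compls, compl_erase]⟩

/-- The largest member of `𝔄` avoiding the point `i` (for `𝔄` an antimatroid); its complement is the
convex closure of `{i}`. -/
def maxAvoiding (𝔄 : Finset (Finset α)) (i : α) : Finset α :=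
  greatestBelow 𝔄 {i}ᶜ

theorem notMem_maxAvoiding (𝔄 : Finset (Finset α)) (i : α) : i ∉ maxAvoiding 𝔄 i :=
  subset_compl_singleton.1 (greatestBelow_le 𝔄 {i}ᶜ)

theorem subset_maxAvoiding {𝔄 : Finset (Finset α)} {A : Finset α} {i : α} (hA : A ∈ 𝔄)
    (hi : i ∉ A) : A ⊆ maxAvoiding 𝔄 i :=
  le_greatestBelow hA (subset_compl_singleton.2 hi)

namespace IsAntimatroid

variable {𝔄 : Finset (Finset α)} {X : Finset α}

theorem maxAvoiding_mem (h𝔄 : IsAntimatroid 𝔄) (i : α) : maxAvoiding 𝔄 i ∈ 𝔄 :=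
  greatestBelow_mem h𝔄.empty_mem h𝔄.supClosed _

theorem insert_maxAvoiding_mem (h𝔄 : IsAntimatroid 𝔄) (i : α) :
    insert i (maxAvoiding 𝔄 i) ∈ 𝔄 := by
  obtain ⟨B, hB, hiB, hBi⟩ := h𝔄.isAccessible.exists_mem_erase_mem h𝔄.univ_mem (mem_univ i)
  have hsub : B.erase i ⊆ maxAvoiding 𝔄 i := subset_maxAvoiding hBi (notMem_erase i B)
  have heq : insert i (maxAvoiding 𝔄 i) = B ∪ maxAvoiding 𝔄 i := by
    rw [← insert_erase hiB, insert_union, union_eq_right.2 hsub]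
  exact heq ▸ h𝔄.supClosed hB (h𝔄.maxAvoiding_mem i)

theorem maxAvoiding_injective (h𝔄 : IsAntimatroid 𝔄) : Function.Injective (maxAvoiding 𝔄) := by
  intro i j hij
  by_contra hne
  have hj : j ∉ insert i (maxAvoiding 𝔄 i) := by
    rw [mem_insert, hij, not_or]
    exact ⟨Ne.symm hne, notMem_maxAvoiding 𝔄 j⟩
  have hsub : insert i (maxAvoiding 𝔄 i) ⊆ maxAvoiding 𝔄 i :=
    (subset_maxAvoiding (h𝔄.insert_maxAvoiding_mem i) hj).trans_eq hij.symm
  exact notMem_maxAvoiding 𝔄 i (hsub (mem_insert_self _ _))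

theorem isInfIrredIn_maxAvoiding (h𝔄 : IsAntimatroid 𝔄) (i : α) :
    IsInfIrredIn 𝔄 (maxAvoiding 𝔄 i) := by
  refine isInfIrredIn_of_forall_lt_le (ssubset_insert (notMem_maxAvoiding 𝔄 i))
    (h𝔄.insert_maxAvoiding_mem i) fun A hA hlt ↦ insert_subset ?_ hlt.le
  by_contra hi
  exact hlt.not_ge (subset_maxAvoiding hA hi)

theorem exists_maxAvoiding_eq (h𝔄 : IsAntimatroid 𝔄) (hX : X ∈ 𝔄) (hirr : IsInfIrredIn 𝔄 X) :
    ∃ i, maxAvoiding 𝔄 i = X := by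
  have hinf : Xᶜ.inf (fun i ↦ ({i}ᶜ : Finset α)) = X := by
    rw [← Finset.compl_sup, sup_singleton_eq_self, compl_compl]
  obtain ⟨i, _, hi⟩ := hirr.exists_greatestBelow_eq h𝔄.empty_mem h𝔄.univ_mem h𝔄.supClosed
    ((congrArg _ hinf).trans (greatestBelow_eq_self hX))
  exact ⟨i, hi⟩

theorem mem_and_isInfIrredIn_iff (h𝔄 : IsAntimatroid 𝔄) :
    X ∈ 𝔄 ∧ IsInfIrredIn 𝔄 X ↔ ∃ i, maxAvoiding 𝔄 i = X := by
  refine ⟨fun h ↦ h𝔄.exists_maxAvoiding_eq h.1 h.2, ?_⟩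
  rintro ⟨i, rfl⟩
  exact ⟨h𝔄.maxAvoiding_mem i, h𝔄.isInfIrredIn_maxAvoiding i⟩

end IsAntimatroid

/-- an antimatroid on `N` with `|N| = n` has exactly `n`
`∧`-irreducible elements (the top element of `(𝔄, ⊆)` being `N`). -/
theorem antimatroid_card_infIrred (S 𝔄 : Finset (Finset α))
    (hS : IsConvexGeometry S) (h𝔄 : 𝔄 = S.image (fun A => Finset.univ \ A)) :
    (𝔄.filter fun X =>
        X ≠ Finset.univ ∧ ∀ A ∈ 𝔄, ∀ B ∈ 𝔄, amInf 𝔄 A B = X → A = X ∨ B = X).card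
      = Fintype.card α := by
  have hanti : IsAntimatroid 𝔄 := by
    simp only [h𝔄, ← compl_eq_univ_sdiff, image_compl]
    exact hS.isAntimatroid_compls
  have himage : (𝔄.filter fun X =>
      X ≠ univ ∧ ∀ A ∈ 𝔄, ∀ B ∈ 𝔄, amInf 𝔄 A B = X → A = X ∨ B = X)
        = univ.image (maxAvoiding 𝔄) := by
    ext X
    rw [mem_filter, mem_image_univ_iff_mem_range, Set.mem_range]
    exact hanti.mem_and_isInfIrredIn_iff
  rw [himage, card_image_of_injective _ hanti.maxAvoiding_injective, card_univ]
end

section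
/- Let N be a finite set with |N| = n and let 𝒬(N) := {(A, B) ∈ 2^N × 2^N : A ∩ B = ∅} be ordered by (A_1, A_2) ⊑ (B_1, B_2) iff A_1 ⊆ B_1 and A_2 ⊇ B_2. Then the number of maximal chains of the lattice (𝒬(N), ⊑) equals (2n)! / 2^n. -/
/-!
Recording for each `x ∈ N` whether it lies in `B`, in neither set, or in `A` identifies `𝒬(N)` with
the `n`-th power of the three-element chain. In a product of chains of lengths `kᵢ`, going down one
covering step lowers one coordinate by one, so the number `c(p)` of saturated chains from the bottom
to `p` satisfies `c(p) = ∑ c(p - eᵢ)`, summed over the `i` with `pᵢ ≠ 0`. This is the recursion of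
the multinomial coefficient `(∑ pᵢ)! / ∏ pᵢ!`, and `pᵢ = 2` throughout at the top.
-/

open Finset

variable {α : Type*} [DecidableEq α] [Fintype α]

/-- The order `⊑` on `𝒬(N)`: `(A₁, A₂) ⊑ (B₁, B₂)` iff `A₁ ⊆ B₁` and `A₂ ⊇ B₂`. -/
def QLE (p q : Finset α × Finset α) : Prop := p.1 ⊆ q.1 ∧ q.2 ⊆ p.2

/-- The corresponding strict order on `𝒬(N)`. -/
def QLT (p q : Finset α × Finset α) : Prop := QLE p q ∧ p ≠ q

/-- `c = (c 0, …, c m)` is a maximal chain of the lattice `(𝒬(N), ⊑)`, where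
`𝒬(N) = {(A, B) : A ∩ B = ∅}`: it goes from the bottom `(∅, N)` to the top
`(N, ∅)` and each consecutive pair is a covering pair in `𝒬(N)`. -/
def IsQMaxChain (m : ℕ) (c : Fin (m + 1) → Finset α × Finset α) : Prop :=
  (∀ i, (c i).1 ∩ (c i).2 = ∅) ∧
    c 0 = (∅, Finset.univ) ∧ c (Fin.last m) = (Finset.univ, ∅) ∧
    ∀ i : Fin m, QLT (c i.castSucc) (c i.succ) ∧
      ∀ x : Finset α × Finset α, x.1 ∩ x.2 = ∅ →
        ¬(QLT (c i.castSucc) x ∧ QLT x (c i.succ))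

open scoped Nat SetRel

section Series

variable {P Q : Type*} {r : SetRel P P} {t : SetRel Q Q} {a b : P}

/-- The series `a = x₀, x₁, …, xₘ = b` of a relation `r`, of any length `m`. -/
def SeriesBetween (r : SetRel P P) (a b : P) : Type _ :=
  {s : RelSeries r // s.head = a ∧ s.last = b}

lemma relSeries_snoc_left_injective {s s' : RelSeries r} (h : s.last ~[r] b)
    (h' : s'.last ~[r] b) (heq : s.snoc b h = s'.snoc b h') : s = s' := by
  apply RelSeries.toList_injective
  simpa using congrArg RelSeries.toList heq

namespace SeriesBetween

/-- Appending a last step to a series: the data are the penultimate point and the series up to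
it. -/
def snoc (s : Σ c : {c // c ~[r] b}, SeriesBetween r a c) : SeriesBetween r a b :=
  ⟨s.2.1.snoc b (s.2.2.2.symm ▸ s.1.2), by simp [s.2.2.1], by simp⟩

lemma snoc_injective : (snoc : _ → SeriesBetween r a b).Injective := by
  rintro ⟨⟨c, hc⟩, s, hs, hsc : s.last = c⟩ ⟨⟨d, hd⟩, s', hs', hsd : s'.last = d⟩ h
  subst hsc hsd
  obtain rfl : s = s' := relSeries_snoc_left_injective hc hd (congrArg Subtype.val h)
  rfl

lemma snoc_surjective (hab : a ≠ b) : (snoc : _ → SeriesBetween r a b).Surjective := by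
  rintro ⟨s, rfl, rfl⟩
  have hs : s.length ≠ 0 := fun h ↦ hab (congrArg s (Fin.ext h.symm))
  exact ⟨⟨⟨_, s.eraseLast_last_rel_last hs⟩, s.eraseLast, rfl, rfl⟩,
    Subtype.ext (s.snoc_self_eraseLast hs)⟩

/-- Every series between distinct points has a unique last step. -/
noncomputable def snocEquiv (hab : a ≠ b) :
    (Σ c : {c // c ~[r] b}, SeriesBetween r a c) ≃ SeriesBetween r a b :=
  .ofBijective snoc ⟨snoc_injective, snoc_surjective hab⟩

lemma card_self (ha : ∀ c, ¬ c ~[r] a) : Nat.card (SeriesBetween r a a) = 1 := by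
  refine Nat.card_eq_one_iff_exists.2 ⟨⟨.singleton r a, rfl, rfl⟩, ?_⟩
  rintro ⟨s, hs, hs'⟩
  have hlen : s.length = 0 := by
    by_contra h
    exact ha _ (hs' ▸ s.eraseLast_last_rel_last h)
  refine Subtype.ext (RelSeries.ext hlen (funext fun i ↦ ?_))
  have hi : i = 0 := Fin.ext (by lia)
  exact (congrArg s hi).trans hs

def congr (e : (· ~[r] ·) ≃r (· ~[t] ·)) (a b : P) :
    SeriesBetween r a b ≃ SeriesBetween t (e a) (e b) where
  toFun s := ⟨s.1.map e.toRelEmbedding.toRelHom, congrArg e s.2.1, congrArg e s.2.2⟩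
  invFun s := ⟨s.1.map e.symm.toRelEmbedding.toRelHom,
    e.toEquiv.symm_apply_eq.2 s.2.1, e.toEquiv.symm_apply_eq.2 s.2.2⟩
  left_inv s := Subtype.ext (RelSeries.ext rfl (funext fun i ↦ e.symm_apply_apply (s.1 i)))
  right_inv s := Subtype.ext (RelSeries.ext rfl (funext fun i ↦ e.apply_symm_apply (s.1 i)))

end SeriesBetween

end Series

/-- The saturated chains from `a` to `b`; those from `⊥` to `⊤` are the maximal chains of a
finite lattice. -/
abbrev SaturatedChain {P : Type*} [Preorder P] (a b : P) : Type _ :=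
  SeriesBetween {(x, y) : P × P | x ⋖ y} a b

def SaturatedChain.congr {P Q : Type*} [Preorder P] [Preorder Q] (e : P ≃o Q) (a b : P) :
    SaturatedChain a b ≃ SaturatedChain (e a) (e b) :=
  SeriesBetween.congr ⟨e.toEquiv, apply_covBy_apply_iff e⟩ a b

section LowerCovers

variable {ι : Type*} [DecidableEq ι] {γ : ι → Type*} [∀ i, PartialOrder (γ i)]
  [∀ i, PredOrder (γ i)]

lemma pi_update_pred_covBy {p : ∀ i, γ i} {i : ι} (hi : ¬ IsMin (p i)) :
    Function.update p i (Order.pred (p i)) ⋖ p :=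
  Pi.covBy_iff_exists_left_eq.2 ⟨i, _, Order.pred_covBy_of_not_isMin hi, rfl⟩

/-- A lower cover of a point of a product lowers exactly one coordinate, by one step. -/
noncomputable def piLowerCoverEquiv (p : ∀ i, γ i) : {i // ¬ IsMin (p i)} ≃ {q // q ⋖ p} :=
  .ofBijective (fun i ↦ ⟨_, pi_update_pred_covBy i.2⟩) <| by
    constructor
    · rintro ⟨i, hi⟩ ⟨j, hj⟩ h
      rw [Subtype.mk.injEq] at h ⊢
      by_contra hij
      have hpred : Order.pred (p i) = p i := by simpa [hij] using congrFun h i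
      exact (Order.pred_lt_of_not_isMin hi).ne hpred
    · rintro ⟨q, hq⟩
      obtain ⟨i, x, hx, rfl⟩ := Pi.covBy_iff_exists_left_eq.1 hq
      exact ⟨⟨i, hx.lt.not_isMin⟩, Subtype.ext (by simp [hx.pred_eq])⟩

lemma card_saturatedChain_bot_pi [∀ i, OrderBot (γ i)] {p : ∀ i, γ i} (hp : p ≠ ⊥)
    [Fintype {i // ¬ IsMin (p i)}]
    [∀ i : {i // ¬ IsMin (p i)},
      Finite (SaturatedChain ⊥ (Function.update p i (Order.pred (p i))))] :
    Nat.card (SaturatedChain ⊥ p) = ∑ i : {i // ¬ IsMin (p i)},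
      Nat.card (SaturatedChain ⊥ (Function.update p i (Order.pred (p i)))) := by
  rw [← Nat.card_sigma]
  exact Nat.card_congr <| (SeriesBetween.snocEquiv hp.symm).symm.trans
    ((piLowerCoverEquiv p).sigmaCongrLeft (β := fun q ↦ SaturatedChain ⊥ q.1)).symm

end LowerCovers

section ProductOfChains

lemma fin_val_pred_add_one {n : ℕ} {x : Fin n} (hx : ¬ IsMin x) :
    ((Order.pred x : Fin n) : ℕ) + 1 = x :=
  (Fin.covBy_iff.1 (Order.pred_covBy_of_not_isMin hx)).succ_eq

variable {ι : Type*} {k : ι → ℕ}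

section DecidableEq

variable [DecidableEq ι]

lemma prod_factorial_add_single [Fintype ι] (f : ι → ℕ) (i : ι) :
    ∏ j, ((f + Pi.single i 1 : ι → ℕ) j)! = (f i + 1) * ∏ j, (f j)! := by
  rw [← mul_prod_erase univ _ (mem_univ i), ← mul_prod_erase univ (fun j ↦ (f j)!) (mem_univ i),
    ← mul_assoc, Pi.add_apply, Pi.single_eq_same, Nat.factorial_succ]
  congr 1
  refine prod_congr rfl fun j hj ↦ ?_
  simp [ne_of_mem_erase hj]

lemma val_update_pred_add_single {p : ∀ i, Fin (k i + 1)} {i : ι} (hi : ¬ IsMin (p i)) :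
    (fun j ↦ (Function.update p i (Order.pred (p i)) j : ℕ)) + Pi.single i 1 =
      fun j ↦ (p j : ℕ) := by
  funext j
  obtain rfl | hj := eq_or_ne j i
  · simp [fin_val_pred_add_one hi]
  · simp [hj]

variable [Fintype ι]

lemma sum_val_update_pred_add_one {p : ∀ i, Fin (k i + 1)} {i : ι} (hi : ¬ IsMin (p i)) :
    ∑ j, (Function.update p i (Order.pred (p i)) j : ℕ) + 1 = ∑ j, (p j : ℕ) := by
  simp [← val_update_pred_add_single hi, Finset.sum_add_distrib]

lemma mul_prod_factorial_update_pred {p : ∀ i, Fin (k i + 1)} {i : ι} (hi : ¬ IsMin (p i)) :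
    p i * ∏ j, (Function.update p i (Order.pred (p i)) j : ℕ)! = ∏ j, (p j : ℕ)! := by
  simpa only [val_update_pred_add_single hi, Function.update_self, fin_val_pred_add_one hi] using
    (prod_factorial_add_single (fun j ↦ (Function.update p i (Order.pred (p i)) j : ℕ)) i).symm

end DecidableEq

variable [Fintype ι]

lemma sum_val_eq_zero_iff_eq_bot {p : ∀ i, Fin (k i + 1)} : ∑ i, (p i : ℕ) = 0 ↔ p = ⊥ := by
  simp [funext_iff, bot_eq_zero]

lemma sum_val_not_isMin (p : ∀ i, Fin (k i + 1)) [Fintype {i // ¬ IsMin (p i)}] :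
    ∑ i : {i // ¬ IsMin (p i)}, (p i : ℕ) = ∑ i, (p i : ℕ) := by
  refine Fintype.sum_of_injective _ Subtype.val_injective _ _ (fun i hi ↦ ?_) fun _ ↦ rfl
  simpa [bot_eq_zero] using hi

theorem card_saturatedChain_bot_mul_prod_factorial (p : ∀ i, Fin (k i + 1)) :
    Nat.card (SaturatedChain ⊥ p) * ∏ i, (p i : ℕ)! = (∑ i, (p i : ℕ))! := by
  classical
  induction hm : ∑ i, (p i : ℕ) generalizing p with
  | zero =>
    obtain rfl := sum_val_eq_zero_iff_eq_bot.1 hm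
    rw [SeriesBetween.card_self fun _ ↦ not_covBy_bot]
    simp [bot_eq_zero]
  | succ m ih =>
    let q (i : {i // ¬ IsMin (p i)}) := Function.update p i (Order.pred (p i))
    have ihq (i) : Nat.card (SaturatedChain ⊥ (q i)) * ∏ j, (q i j : ℕ)! = m ! :=
      ih (q i) (Nat.succ_injective ((sum_val_update_pred_add_one i.2).trans hm))
    -- `Nat.card` of an infinite type is `0`, so the count itself yields finiteness.
    have hfin (i) : Finite (SaturatedChain ⊥ (q i)) :=
      Nat.finite_of_card_ne_zero (left_ne_zero_of_mul (ihq i ▸ m.factorial_ne_zero))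
    have hp : p ≠ ⊥ := sum_val_eq_zero_iff_eq_bot.not.1 (hm ▸ m.succ_ne_zero)
    calc
      _ = ∑ i, Nat.card (SaturatedChain ⊥ (q i)) * ∏ j, (p j : ℕ)! := by
        rw [card_saturatedChain_bot_pi hp, sum_mul]
      _ = ∑ i : {i // ¬ IsMin (p i)}, p i * m ! := by
        refine sum_congr rfl fun i _ ↦ ?_
        rw [← mul_prod_factorial_update_pred i.2, mul_left_comm, ihq]
      _ = (m + 1)! := by rw [← sum_mul, sum_val_not_isMin, hm, Nat.factorial_succ]

theorem card_saturatedChain_bot_top_pi_fin (k : ι → ℕ) :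
    Nat.card (SaturatedChain (⊥ : ∀ i, Fin (k i + 1)) ⊤) = Nat.multinomial univ k := by
  have h := card_saturatedChain_bot_mul_prod_factorial (k := k) ⊤
  rw [Nat.multinomial]
  refine Nat.eq_div_of_mul_eq_left (prod_ne_zero_iff.2 fun i _ ↦ (k i).factorial_ne_zero) ?_
  simpa [Fin.top_eq_last] using h

end ProductOfChains

/-- The set `𝒬(N)` of pairs of disjoint subsets of `N`, with the order `⊑`. -/
def DisjointPair (α : Type*) [DecidableEq α] : Type _ :=
  {p : Finset α × Finset α // p.1 ∩ p.2 = ∅}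

namespace DisjointPair

instance : PartialOrder (DisjointPair α) where
  le p q := QLE p.1 q.1
  le_refl _ := ⟨subset_rfl, subset_rfl⟩
  le_trans _ _ _ h h' := ⟨h.1.trans h'.1, h'.2.trans h.2⟩
  le_antisymm _ _ h h' := Subtype.ext (Prod.ext (h.1.antisymm h'.1) (h'.2.antisymm h.2))

instance : BoundedOrder (DisjointPair α) where
  bot := ⟨(∅, univ), empty_inter _⟩
  bot_le _ := ⟨empty_subset _, subset_univ _⟩
  top := ⟨(univ, ∅), inter_empty _⟩
  le_top _ := ⟨subset_univ _, empty_subset _⟩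

omit [Fintype α] in
lemma lt_iff_qlt {p q : DisjointPair α} : p < q ↔ QLT p.1 q.1 :=
  lt_iff_le_and_ne.trans (and_congr_right' Subtype.coe_ne_coe.symm)

omit [Fintype α] in
lemma covBy_iff {p q : DisjointPair α} :
    p ⋖ q ↔ QLT p.1 q.1 ∧
      ∀ x : Finset α × Finset α, x.1 ∩ x.2 = ∅ → ¬ (QLT p.1 x ∧ QLT x q.1) := by
  simp only [CovBy, lt_iff_qlt, not_and]
  exact and_congr_right' Subtype.forall

/-- The position of `x ∈ N` relative to a pair `(A, B)`: `0` on `B`, `2` on `A`, and `1` on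
neither. -/
def level (p : DisjointPair α) (x : α) : Fin 3 :=
  if x ∈ p.1.1 then 2 else if x ∈ p.1.2 then 0 else 1

omit [Fintype α] in
lemma level_eq_two_iff {p : DisjointPair α} {x : α} : p.level x = 2 ↔ x ∈ p.1.1 := by
  grind [level]

omit [Fintype α] in
lemma level_eq_zero_iff {p : DisjointPair α} {x : α} : p.level x = 0 ↔ x ∈ p.1.2 := by
  have hdisj : x ∈ p.1.2 → x ∉ p.1.1 :=
    fun h ↦ disjoint_right.1 (disjoint_iff_inter_eq_empty.2 p.2) h
  grind [level]

omit [Fintype α] in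
lemma level_le_level_iff {p q : DisjointPair α} : p.level ≤ q.level ↔ p ≤ q := by
  have fin_three_le_iff : ∀ a b : Fin 3, a ≤ b ↔ (a = 2 → b = 2) ∧ (b = 0 → a = 0) := by decide
  simp only [Pi.le_def, fin_three_le_iff, level_eq_two_iff, level_eq_zero_iff]
  exact forall_and

/-- `𝒬(N)` is a power of the three-element chain. -/
def levelOrderIso : DisjointPair α ≃o (α → Fin 3) where
  toFun := level
  invFun f := ⟨(univ.filter (f · = 2), univ.filter (f · = 0)), by
    ext x
    simp +contextual⟩
  left_inv p := Subtype.ext <| Prod.ext (by ext; simp [level_eq_two_iff])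
    (by ext; simp [level_eq_zero_iff])
  right_inv f := by
    funext x
    grind [level]
  map_rel_iff' := level_le_level_iff

/-- The maximal chains of `𝒬(N)`, as saturated chains from bottom to top. -/
def maxChainEquiv :
    {p : Σ m : ℕ, Fin (m + 1) → Finset α × Finset α // IsQMaxChain p.1 p.2} ≃
      SaturatedChain (⊥ : DisjointPair α) ⊤ where
  toFun c := ⟨⟨c.1.1, fun i ↦ ⟨c.1.2 i, c.2.1 i⟩, fun i ↦ covBy_iff.2 (c.2.2.2.2 i)⟩,
    Subtype.ext c.2.2.1, Subtype.ext c.2.2.2.1⟩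
  invFun s := ⟨⟨s.1.length, fun i ↦ (s.1 i).1⟩, fun i ↦ (s.1 i).2,
    congrArg Subtype.val s.2.1, congrArg Subtype.val s.2.2, fun i ↦ covBy_iff.1 (s.1.step i)⟩

end DisjointPair

/-- the number of maximal chains of the lattice `(𝒬(N), ⊑)` equals
`(2n)! / 2^n`, where `n = |N|`. -/
theorem card_maxChains_Q :
    Nat.card {p : Σ m : ℕ, Fin (m + 1) → Finset α × Finset α // IsQMaxChain p.1 p.2}
      = (2 * Fintype.card α).factorial / 2 ^ Fintype.card α := by
  calc
    _ = Nat.card (SaturatedChain (⊥ : DisjointPair α) ⊤) :=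
      Nat.card_congr DisjointPair.maxChainEquiv
    _ = Nat.card (SaturatedChain (⊥ : α → Fin (2 + 1)) ⊤) := by
      rw [Nat.card_congr (SaturatedChain.congr DisjointPair.levelOrderIso ⊥ ⊤), map_bot, map_top]
    _ = Nat.multinomial univ fun _ : α ↦ 2 := card_saturatedChain_bot_top_pi_fin _
    _ = _ := by simp [Nat.multinomial, mul_comm]
end
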